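/- For every x ∈ U, the second derivative of the squared mean curvature at t = 0 is ∂²(H(t)²)/∂t² |_{t=0} = 6 (f(x) + φ'(0))² + (12/n)(f(x) + φ'(0)) Δf(x) + (2/n²)(Δf(x))² + ((4 − 2n)/n) |∇f(x)|² − 2 φ''(0). -/

import Mathlib

open MeasureTheory Real Set
open scoped RealInnerProductSpace

noncomputable section

abbrev En (n : ℕ) : Type := EuclideanSpace ℝ (Fin n)

/-- Partial derivative of `F` in the `i`-th coordinate direction. -/
def pd {m : ℕ} {E : Type} [NormedAddCommGroup E] [NormedSpace ℝ E]
    (i : Fin m) (F : En m → E) (x : En m) : E :=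
  fderiv ℝ F x (EuclideanSpace.single i 1)

/-- The induced (first fundamental form) metric of a map `Y : U → ℝ^{n+1}`. -/
def gmet {n : ℕ} (Y : En n → En (n + 1)) (x : En n) : Matrix (Fin n) (Fin n) ℝ :=
  Matrix.of fun i j => ⟪pd i Y x, pd j Y x⟫

/-- The variation `X(t,x) = (1 + t f(x) + φ(t)) Φ(x)`. -/
def Xvar {n : ℕ} (f : En n → ℝ) (φ : ℝ → ℝ) (Φ : En n → En (n + 1)) (t : ℝ) (x : En n) :
    En (n + 1) :=
  (1 + t * f x + φ t) • Φ x

/-- Second fundamental form `h_{ij} = ⟨∂X/∂x_i, ∂N/∂x_j⟩`. -/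
def sff {n : ℕ} (Y Nf : En n → En (n + 1)) (x : En n) : Matrix (Fin n) (Fin n) ℝ :=
  Matrix.of fun i j => ⟪pd i Y x, pd j Nf x⟫

/-- Mean curvature `H = (1/n) Σ g^{ij} h_{ij}`. -/
def Hmean {n : ℕ} (Y Nf : En n → En (n + 1)) (x : En n) : ℝ :=
  (1 / (n : ℝ)) * ∑ i, ∑ j, (gmet Y x)⁻¹ i j * sff Y Nf x i j

/-- The volume element `√(det g)`. -/
def vElem {n : ℕ} (Y : En n → En (n + 1)) (x : En n) : ℝ :=
  Real.sqrt (gmet Y x).det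

/-- `|∇u|² = Σ g^{ij} ∂_i u ∂_j u` with respect to the metric of `Φ`. -/
def gradSq {n : ℕ} (Φ : En n → En (n + 1)) (u : En n → ℝ) (x : En n) : ℝ :=
  ∑ i, ∑ j, (gmet Φ x)⁻¹ i j * pd i u x * pd j u x

/-- Tangential gradient `∇u = Σ g^{ij} ∂_i u ∂_j Φ ∈ ℝ^{n+1}`. -/
def gradV {n : ℕ} (Φ : En n → En (n + 1)) (u : En n → ℝ) (x : En n) : En (n + 1) :=
  ∑ i, ∑ j, ((gmet Φ x)⁻¹ i j * pd i u x) • pd j Φ x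

/-- Laplace–Beltrami operator `Δu = (1/√g) Σ ∂_i (√g g^{ij} ∂_j u)`. -/
def lapl {n : ℕ} (Φ : En n → En (n + 1)) (u : En n → ℝ) (x : En n) : ℝ :=
  (vElem Φ x)⁻¹ * ∑ i, ∑ j, pd i (fun y => vElem Φ y * (gmet Φ y)⁻¹ i j * pd j u y) x

/-- Christoffel symbols of the metric of `Φ`. -/
def christoffel {n : ℕ} (Φ : En n → En (n + 1)) (k i j : Fin n) (x : En n) : ℝ :=
  (1 / 2) * ∑ l, (gmet Φ x)⁻¹ k l *
    (pd i (fun y => gmet Φ y l j) x + pd j (fun y => gmet Φ y l i) x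
      - pd l (fun y => gmet Φ y i j) x)

/-- Hessian `(∇²u)_{ij} = ∂²u/∂x_i∂x_j − Σ_k Γ^k_{ij} ∂_k u`. -/
def hess {n : ℕ} (Φ : En n → En (n + 1)) (u : En n → ℝ) (x : En n) (i j : Fin n) : ℝ :=
  pd i (fun y => pd j u y) x - ∑ k, christoffel Φ k i j x * pd k u x

/-- `F` has the 2-jet `(a, b, c)` at `0`. -/
def Jet2 (F : ℝ → ℝ) (a b c : ℝ) : Prop :=
  ∃ F' : ℝ → ℝ, (∀ᶠ t in nhds (0 : ℝ), HasDerivAt F (F' t) t) ∧ F 0 = a ∧ F' 0 = b ∧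
    HasDerivAt F' c 0

lemma Jet2.deriv2 {F : ℝ → ℝ} {a b c : ℝ} (h : Jet2 F a b c) : deriv (deriv F) 0 = c := by
  obtain ⟨F', h1, h2, h3, h4⟩ := h
  have : deriv F =ᶠ[nhds 0] F' := h1.mono fun t ht => ht.deriv
  rw [this.deriv_eq, h4.deriv]

lemma Jet2.congr {F G : ℝ → ℝ} {a b c : ℝ} (h : Jet2 F a b c) (e : G =ᶠ[nhds 0] F) :
    Jet2 G a b c := by
  obtain ⟨F', h1, h2, h3, h4⟩ := h
  refine ⟨F', ?_, by rw [e.eq_of_nhds, h2], h3, h4⟩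
  filter_upwards [h1, e.eventuallyEq_nhds] with t ht et
  exact ht.congr_of_eventuallyEq et

lemma Jet2.const (a : ℝ) : Jet2 (fun _ => a) a 0 0 :=
  ⟨fun _ => 0, Filter.Eventually.of_forall fun t => hasDerivAt_const t a, rfl, rfl,
    hasDerivAt_const _ _⟩

lemma Jet2.id : Jet2 (fun t => t) 0 1 0 :=
  ⟨fun _ => 1, Filter.Eventually.of_forall fun t => hasDerivAt_id t, rfl, rfl,
    hasDerivAt_const _ _⟩

lemma Jet2.add {F G : ℝ → ℝ} {a b c a' b' c' : ℝ} (h : Jet2 F a b c) (k : Jet2 G a' b' c') :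
    Jet2 (fun t => F t + G t) (a + a') (b + b') (c + c') := by
  obtain ⟨F', h1, h2, h3, h4⟩ := h
  obtain ⟨G', k1, k2, k3, k4⟩ := k
  refine ⟨fun t => F' t + G' t, ?_, by simp [h2, k2], by simp [h3, k3], h4.add k4⟩
  filter_upwards [h1, k1] with t x y using x.add y

lemma Jet2.mul {F G : ℝ → ℝ} {a b c a' b' c' : ℝ} (h : Jet2 F a b c) (k : Jet2 G a' b' c') :
    Jet2 (fun t => F t * G t) (a * a') (b * a' + a * b') (c * a' + 2 * b * b' + a * c') := by
  obtain ⟨F', h1, h2, h3, h4⟩ := h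
  obtain ⟨G', k1, k2, k3, k4⟩ := k
  refine ⟨fun t => F' t * G t + F t * G' t, ?_, by simp [h2, k2], by simp [h2, h3, k2, k3], ?_⟩
  · filter_upwards [h1, k1] with t x y using x.mul y
  · have := (h4.mul k1.self_of_nhds).add (h1.self_of_nhds.mul k4)
    refine HasDerivAt.congr_deriv this ?_
    rw [h2, h3, k2, k3]; ring

lemma Jet2.inv {F : ℝ → ℝ} {a b c : ℝ} (h : Jet2 F a b c) (ha : a ≠ 0) :
    Jet2 (fun t => (F t)⁻¹) a⁻¹ (-b / a ^ 2) (-c / a ^ 2 + 2 * b ^ 2 / a ^ 3) := by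
  obtain ⟨F', h1, h2, h3, h4⟩ := h
  have h10 := h1.self_of_nhds
  have hne : ∀ᶠ t in nhds (0 : ℝ), F t ≠ 0 :=
    h10.continuousAt.eventually_ne (by rw [h2]; exact ha)
  refine ⟨fun t => -F' t / (F t) ^ 2, ?_, by simp [h2], by simp [h2, h3], ?_⟩
  · filter_upwards [h1, hne] with t x y using x.inv y
  · have := (h4.neg).div (h10.pow 2) (by simp [h2, ha])
    refine HasDerivAt.congr_deriv this ?_
    simp only [h2, h3, Pi.pow_apply, Pi.neg_apply]
    field_simp
    push_cast
    ring

lemma jet_final (p p2 f0 L q B m : ℝ) (hm : m ≠ 0) (r : ℝ → ℝ) (hr : Jet2 r 1 (f0 + p) p2) :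
    Jet2 (fun t => ((r t ^ 2)⁻¹ * (r t * t * L - m * r t ^ 2 - 2 * t ^ 2 * q
        - t ^ 2 * (r t ^ 2 + t ^ 2 * q)⁻¹ * (r t * t * B - r t ^ 2 * q - 2 * t ^ 2 * q ^ 2))) ^ 2
        * (m ^ 2 * (r t ^ 2 + t ^ 2 * q))⁻¹) 1 (-2 * (f0 + p + L / m))
      (6 * (f0 + p) ^ 2 + (12 / m) * (f0 + p) * L + (2 / m ^ 2) * L ^ 2
        + ((4 - 2 * m) / m) * q - 2 * p2) := by
  have r2 := hr.mul hr
  have t2 := Jet2.id.mul Jet2.id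
  have D := r2.add (t2.mul (Jet2.const q))
  have Di := D.inv (by norm_num)
  have S1 := ((hr.mul Jet2.id).mul (Jet2.const L)).add
    ((r2.mul (Jet2.const (-m))).add (t2.mul (Jet2.const (-2 * q))))
  have S2 := ((hr.mul Jet2.id).mul (Jet2.const B)).add
    ((r2.mul (Jet2.const (-q))).add (t2.mul (Jet2.const (-2 * q ^ 2))))
  have S := (r2.inv (by norm_num)).mul
    (S1.add (((t2.mul Di).mul S2).mul (Jet2.const (-1))))
  have R := (S.mul S).mul (((Jet2.const (m ^ 2)).mul D).inv (by simpa using hm))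
  convert R.congr ?_ using 1
  · field_simp; ring
  · field_simp; ring
  · field_simp; ring
  · refine Filter.Eventually.of_forall fun t => ?_
    simp only [pow_two]
    ring

/-- `F` is differentiable at `x` with `i`-th partial derivative `v`. -/
def HPD {m : ℕ} {E : Type} [NormedAddCommGroup E] [NormedSpace ℝ E]
    (i : Fin m) (F : En m → E) (v : E) (x : En m) : Prop :=
  DifferentiableAt ℝ F x ∧ pd i F x = v

section HPDlemmas
variable {m : ℕ} {E : Type} [NormedAddCommGroup E] [NormedSpace ℝ E] {i : Fin m} {x : En m}

lemma HPD.of_hasFDerivAt {F : En m → E} {F' : En m →L[ℝ] E} (h : HasFDerivAt F F' x) :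
    HPD i F (F' (EuclideanSpace.single i 1)) x :=
  ⟨h.differentiableAt, by rw [pd, h.fderiv]⟩

lemma HPD.has {F : En m → E} {v : E} (h : HPD i F v x) : ∃ F' : En m →L[ℝ] E,
    HasFDerivAt F F' x ∧ F' (EuclideanSpace.single i 1) = v :=
  ⟨_, h.1.hasFDerivAt, h.2⟩

lemma HPD.cv {F : En m → E} {v w : E} (h : HPD i F v x) (e : v = w) : HPD i F w x := e ▸ h

lemma HPD.of_diff {F : En m → E} (h : DifferentiableAt ℝ F x) : HPD i F (pd i F x) x := ⟨h, rfl⟩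

lemma HPD.congr {F G : En m → E} {v : E} (h : HPD i F v x) (e : G =ᶠ[nhds x] F) :
    HPD i G v x := by
  obtain ⟨F', h', rfl⟩ := h.has
  exact HPD.of_hasFDerivAt (h'.congr_of_eventuallyEq e)

lemma HPD.const (a : E) : HPD i (fun _ => a) 0 x :=
  (HPD.of_hasFDerivAt (hasFDerivAt_const a x)).cv (by simp)

lemma HPD.add {F G : En m → E} {v w : E} (h : HPD i F v x) (k : HPD i G w x) :
    HPD i (fun y => F y + G y) (v + w) x := by
  obtain ⟨F', h', rfl⟩ := h.has
  obtain ⟨G', k', rfl⟩ := k.has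
  exact (HPD.of_hasFDerivAt (h'.add k')).cv (by simp)

lemma HPD.sum {ι : Type} {s : Finset ι} {F : ι → En m → E} {v : ι → E}
    (h : ∀ k ∈ s, HPD i (F k) (v k) x) : HPD i (fun y => ∑ k ∈ s, F k y) (∑ k ∈ s, v k) x := by
  have := HasFDerivAt.fun_sum (u := s) (fun k hk => (h k hk).1.hasFDerivAt)
  refine (HPD.of_hasFDerivAt this).cv ?_
  rw [sum_apply]
  exact Finset.sum_congr rfl fun k hk => (h k hk).2

lemma HPD.mul {F G : En m → ℝ} {v w : ℝ} (h : HPD i F v x) (k : HPD i G w x) :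
    HPD i (fun y => F y * G y) (v * G x + F x * w) x := by
  obtain ⟨F', h', rfl⟩ := h.has
  obtain ⟨G', k', rfl⟩ := k.has
  exact (HPD.of_hasFDerivAt (h'.mul k')).cv (by simp; ring)

lemma HPD.smul {F : En m → ℝ} {G : En m → E} {v : ℝ} {w : E} (h : HPD i F v x) (k : HPD i G w x) :
    HPD i (fun y => F y • G y) (v • G x + F x • w) x := by
  obtain ⟨F', h', rfl⟩ := h.has
  obtain ⟨G', k', rfl⟩ := k.has
  exact (HPD.of_hasFDerivAt (h'.smul k')).cv (by simp; abel)

lemma HPD.inner {d : ℕ} {F G : En m → En d} {v w : En d} (h : HPD i F v x) (k : HPD i G w x) :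
    HPD i (fun y => ⟪F y, G y⟫) (⟪v, G x⟫ + ⟪F x, w⟫) x := by
  obtain ⟨F', h', rfl⟩ := h.has
  obtain ⟨G', k', rfl⟩ := k.has
  exact (HPD.of_hasFDerivAt (h'.inner ℝ k')).cv (by simp [fderivInnerCLM_apply]; ring)

lemma HPD.sqrt {F : En m → ℝ} {v : ℝ} (h : HPD i F v x) (h0 : F x ≠ 0) :
    HPD i (fun y => Real.sqrt (F y)) (v / (2 * Real.sqrt (F x))) x := by
  obtain ⟨F', h', rfl⟩ := h.has
  exact (HPD.of_hasFDerivAt (h'.sqrt h0)).cv (by simp; ring)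

lemma HPD.unique {F : En m → E} {v w : E} (h : HPD i F v x) (k : HPD i F w x) : v = w :=
  h.2.symm.trans k.2

lemma HPD.det {d : ℕ} {G : En m → Matrix (Fin d) (Fin d) ℝ} {G' : Matrix (Fin d) (Fin d) ℝ}
    (h : ∀ a b, HPD i (fun y => G y a b) (G' a b) x) :
    HPD i (fun y => (G y).det) (∑ k, ∑ l, (G x).adjugate k l * G' l k) x := by
  have h1 : HPD i (fun y => ∑ σ : Equiv.Perm (Fin d),
      ((Equiv.Perm.sign σ : ℤ) : ℝ) * ∏ a, G y (σ a) a)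
      (∑ σ : Equiv.Perm (Fin d), ((Equiv.Perm.sign σ : ℤ) : ℝ) *
        ∑ k, (∏ a ∈ Finset.univ.erase k, G x (σ a) a) * G' (σ k) k) x := by
    refine HPD.sum fun σ _ => ?_
    have hp := HasFDerivAt.finsetProd (u := Finset.univ) (g := fun a y => G y (σ a) a)
      (fun a _ => (h (σ a) a).1.hasFDerivAt)
    have hp' := (HPD.const (i := i) (x := x) ((Equiv.Perm.sign σ : ℤ) : ℝ)).mul
      (HPD.of_hasFDerivAt (i := i) hp)
    refine hp'.cv ?_
    simp only [zero_mul, zero_add, sum_apply]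
    congr 1
    refine Finset.sum_congr rfl fun k _ => ?_
    have := (h (σ k) k).2
    rw [pd] at this
    simp [this]
  have h2 : (fun y => (G y).det) = (fun y => ∑ σ : Equiv.Perm (Fin d),
      ((Equiv.Perm.sign σ : ℤ) : ℝ) * ∏ a, G y (σ a) a) := by
    funext y; rw [Matrix.det_apply']
  rw [h2]
  refine h1.cv ?_
  simp only [Finset.mul_sum]
  rw [Finset.sum_comm]
  refine Finset.sum_congr rfl fun k _ => ?_
  have h3 : ∑ l, (G x).adjugate k l * G' l k = ((G x).updateCol k (fun l => G' l k)).det := by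
    rw [← Matrix.cramer_apply, Matrix.cramer_eq_adjugate_mulVec]; rfl
  rw [h3, Matrix.det_apply']
  refine Finset.sum_congr rfl fun σ _ => ?_
  rw [← Finset.mul_prod_erase Finset.univ _ (Finset.mem_univ k)]
  have : ∏ a ∈ Finset.univ.erase k, ((G x).updateCol k (fun l => G' l k)) (σ a) a
      = ∏ a ∈ Finset.univ.erase k, G x (σ a) a := by
    refine Finset.prod_congr rfl fun a ha => ?_
    rw [Matrix.updateCol_ne (Finset.ne_of_mem_erase ha)]
  rw [this, Matrix.updateCol_self]
  ring

lemma diff_det {d : ℕ} {G : En m → Matrix (Fin d) (Fin d) ℝ}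
    (h : ∀ a b, DifferentiableAt ℝ (fun y => G y a b) x) :
    DifferentiableAt ℝ (fun y => (G y).det) x := by
  simp only [Matrix.det_apply']
  refine DifferentiableAt.fun_sum fun σ _ => ?_
  refine DifferentiableAt.const_mul ?_ _
  exact (HasFDerivAt.finsetProd (u := Finset.univ) (g := fun a y => G y (σ a) a)
      (fun a _ => (h (σ a) a).hasFDerivAt)).differentiableAt

lemma HPD.matInv {d : ℕ} {G : En m → Matrix (Fin d) (Fin d) ℝ} {G' : Matrix (Fin d) (Fin d) ℝ}
    (h : ∀ a b, HPD i (fun y => G y a b) (G' a b) x) (h0 : (G x).det ≠ 0) (a b : Fin d) :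
    HPD i (fun y => (G y)⁻¹ a b) (-((G x)⁻¹ * G' * (G x)⁻¹) a b) x := by
  have hd : DifferentiableAt ℝ (fun y => (G y).det) x := diff_det fun a b => (h a b).1
  have hdi : ∀ a b, DifferentiableAt ℝ (fun y => (G y)⁻¹ a b) x := by
    intro a b
    have : (fun y => (G y)⁻¹ a b) = fun y => ((G y).det)⁻¹ * (G y).adjugate a b := by
      funext y; rw [Matrix.inv_def]; simp
    rw [this]
    refine (hd.inv h0).mul ?_
    simp only [Matrix.adjugate_apply]
    refine diff_det fun p q => ?_
    by_cases hp : p = b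
    · subst hp; simp
    · simpa [Matrix.updateRow_ne hp] using (h p q).1
  have ev : ∀ᶠ y in nhds x, (G y).det ≠ 0 := hd.continuousAt.eventually_ne h0
  set K : Matrix (Fin d) (Fin d) ℝ := Matrix.of fun a b => pd i (fun y => (G y)⁻¹ a b) x with hK
  have hKd : ∀ a b, HPD i (fun y => (G y)⁻¹ a b) (K a b) x := fun a b => ⟨hdi a b, rfl⟩
  have key : G' * (G x)⁻¹ + G x * K = 0 := by
    ext a b
    have e1 : HPD i (fun y => ∑ k, G y a k * (G y)⁻¹ k b)
        (∑ k, (G' a k * (G x)⁻¹ k b + G x a k * K k b)) x :=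
      HPD.sum fun k _ => (h a k).mul (hKd k b)
    have e2 : HPD i (fun y => ∑ k, G y a k * (G y)⁻¹ k b) 0 x := by
      refine (HPD.const ((1 : Matrix (Fin d) (Fin d) ℝ) a b)).congr ?_
      filter_upwards [ev] with y hy
      rw [← Matrix.mul_apply, Matrix.mul_nonsing_inv _ (isUnit_iff_ne_zero.2 hy)]
    have := e1.unique e2
    rw [Finset.sum_add_distrib] at this
    simpa [Matrix.mul_apply] using this
  have hu : IsUnit (G x).det := isUnit_iff_ne_zero.2 h0
  have : K = -((G x)⁻¹ * G' * (G x)⁻¹) := by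
    have h5 : (G x)⁻¹ * (G' * (G x)⁻¹ + G x * K) = 0 := by rw [key, mul_zero]
    rw [mul_add, ← mul_assoc, ← mul_assoc, Matrix.nonsing_inv_mul _ hu, one_mul] at h5
    rw [eq_neg_iff_add_eq_zero, add_comm, h5]
  have hh := hKd a b
  rw [this] at hh
  exact hh

end HPDlemmas

lemma smooth_facts {m : ℕ} {E : Type} [NormedAddCommGroup E] [NormedSpace ℝ E]
    {U : Set (En m)} (hU : IsOpen U) {F : En m → E} (hF : ContDiffOn ℝ (⊤ : ℕ∞) F U)
    {x : En m} (hx : x ∈ U) :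
    DifferentiableAt ℝ F x ∧ (∀ j, DifferentiableAt ℝ (fun y => pd j F y) x) ∧
      ∀ i j, pd i (fun y => pd j F y) x = pd j (fun y => pd i F y) x := by
  have hc : ContDiffAt ℝ (⊤ : ℕ∞) F x := hF.contDiffAt (hU.mem_nhds hx)
  have hc2 : ContDiffAt ℝ 2 F x := hc.of_le (WithTop.coe_le_coe.2 (le_top : (2 : ℕ∞) ≤ ⊤))
  have hd : DifferentiableAt ℝ (fderiv ℝ F) x :=
    (hc2.fderiv_right (m := 1) (by norm_num)).differentiableAt (by norm_num)
  refine ⟨hc.differentiableAt (by simp), fun j => ?_, fun i j => ?_⟩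
  · exact hd.clm_apply (differentiableAt_const _)
  · have hs : IsSymmSndFDerivAt ℝ F x := hc2.isSymmSndFDerivAt (by simp)
    have e : ∀ i j, pd i (fun y => pd j F y) x
        = fderiv ℝ (fderiv ℝ F) x (EuclideanSpace.single i 1) (EuclideanSpace.single j 1) := by
      intro i j
      have := (hd.hasFDerivAt.clm_apply
        (hasFDerivAt_const (EuclideanSpace.single j (1 : ℝ) : En m) x))
      change fderiv ℝ (fun y => fderiv ℝ F y (EuclideanSpace.single j 1)) x _ = _
      rw [this.fderiv]
      simp
    rw [e, e]
    exact hs _ _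

lemma lapl_algebra {n : ℕ} (Ai : Matrix (Fin n) (Fin n) ℝ) (hs : ∀ i j, Ai i j = Ai j i)
    (C : Fin n → Fin n → Fin n → ℝ) (hC : ∀ k i j, C k i j = C k j i) (v : Fin n → ℝ)
    (Hs : Fin n → Fin n → ℝ) :
    ∑ i, ∑ j, ((1 / 2 * ∑ k, ∑ l, Ai k l * (C k i l + C l i k)) * Ai i j * v j
      - (Ai * (Matrix.of fun k l => C l i k + C k i l) * Ai) i j * v j + Ai i j * Hs i j)
    = ∑ i, ∑ j, Ai i j * (Hs i j - ∑ k, (∑ l, Ai k l * v l) * C k i j) := by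
  set u : Fin n → ℝ := fun k => ∑ l, Ai k l * v l with hu
  have hhalf : ∀ i, (1 / 2 * ∑ k, ∑ l, Ai k l * (C k i l + C l i k))
      = ∑ k, ∑ l, Ai k l * C k i l := by
    intro i
    have h1 : ∑ k, ∑ l, Ai k l * (C k i l + C l i k)
        = ∑ k, ∑ l, Ai k l * C k i l + ∑ k, ∑ l, Ai k l * C l i k := by
      simp only [mul_add, Finset.sum_add_distrib]
    have h2 : ∑ k, ∑ l, Ai k l * C l i k = ∑ k, ∑ l, Ai k l * C k i l := by
      rw [Finset.sum_comm]
      refine Finset.sum_congr rfl fun k _ => Finset.sum_congr rfl fun l _ => ?_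
      rw [hs]
    rw [h1, h2]; ring
  have t1 : ∑ i, ∑ j, (1 / 2 * ∑ k, ∑ l, Ai k l * (C k i l + C l i k)) * Ai i j * v j
      = ∑ i, ∑ k, ∑ l, u i * (Ai k l * C k i l) := by
    refine Finset.sum_congr rfl fun i _ => ?_
    simp only [hhalf, mul_assoc, ← Finset.mul_sum]
    rw [mul_comm]
  have t2 : ∑ i, ∑ j, (Ai * (Matrix.of fun k l => C l i k + C k i l) * Ai) i j * v j
      = ∑ i, ∑ k, ∑ l, Ai i k * (C l i k + C k i l) * u l := by
    refine Finset.sum_congr rfl fun i _ => ?_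
    have : ∑ j, (Ai * (Matrix.of fun k l => C l i k + C k i l) * Ai) i j * v j
        = ((Ai * (Matrix.of fun k l => C l i k + C k i l) * Ai).mulVec v) i := rfl
    rw [this, ← Matrix.mulVec_mulVec]
    have hu' : Ai.mulVec v = u := rfl
    rw [hu']
    simp only [Matrix.mulVec, dotProduct, Matrix.mul_apply, Matrix.of_apply, Finset.sum_mul]
    rw [Finset.sum_comm]
  have t3 : ∑ i, ∑ j, Ai i j * (Hs i j - ∑ k, u k * C k i j)
      = ∑ i, ∑ j, Ai i j * Hs i j - ∑ i, ∑ j, ∑ k, Ai i j * (u k * C k i j) := by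
    simp only [mul_sub, Finset.sum_sub_distrib, Finset.mul_sum]
  have t4 : ∑ i, ∑ k, ∑ l, Ai i k * (C l i k + C k i l) * u l
      = ∑ i, ∑ j, ∑ k, Ai i j * (u k * C k i j) + ∑ i, ∑ k, ∑ l, u l * (Ai i k * C k i l) := by
    simp only [← Finset.sum_add_distrib]
    refine Finset.sum_congr rfl fun i _ => Finset.sum_congr rfl fun k _ =>
      Finset.sum_congr rfl fun l _ => ?_
    ring
  have t5 : ∑ i, ∑ k, ∑ l, u l * (Ai i k * C k i l) = ∑ i, ∑ k, ∑ l, u i * (Ai k l * C k i l) := by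
    calc ∑ i, ∑ k, ∑ l, u l * (Ai i k * C k i l)
        = ∑ i, ∑ l, ∑ k, u l * (Ai i k * C k i l) :=
          Finset.sum_congr rfl fun i _ => Finset.sum_comm
      _ = ∑ l, ∑ i, ∑ k, u l * (Ai i k * C k i l) := Finset.sum_comm
      _ = ∑ l, ∑ k, ∑ i, u l * (Ai i k * C k i l) :=
          Finset.sum_congr rfl fun i _ => Finset.sum_comm
      _ = _ := by
          refine Finset.sum_congr rfl fun i _ => Finset.sum_congr rfl fun k _ =>
            Finset.sum_congr rfl fun l _ => ?_
          rw [hs l k, hC k l i]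
  simp only [Finset.sum_add_distrib, Finset.sum_sub_distrib]
  rw [t1, t2, t4, t5, t3]
  ring

lemma lapl_eq {n : ℕ} {U : Set (En n)} (hU : IsOpen U)
    {Φ : En n → En (n + 1)} {f : En n → ℝ}
    (hΦ : ContDiffOn ℝ (⊤ : ℕ∞) Φ U) (hf : ContDiffOn ℝ (⊤ : ℕ∞) f U)
    (himm : ∀ x ∈ U, (gmet Φ x).PosDef) {x : En n} (hx : x ∈ U) :
    lapl Φ f x = ∑ i, ∑ j, (gmet Φ x)⁻¹ i j * (pd i (fun y => pd j f y) x
      - ∑ k, (∑ l, (gmet Φ x)⁻¹ k l * pd l f x) * ⟪pd k Φ x, pd i (fun y => pd j Φ y) x⟫) := by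
  obtain ⟨-, hΦ1, hΦ2⟩ := smooth_facts hU hΦ hx
  obtain ⟨-, hf1, hf2⟩ := smooth_facts hU hf hx
  have hpos : 0 < (gmet Φ x).det := (himm x hx).det_pos
  have hw : 0 < vElem Φ x := Real.sqrt_pos.2 hpos
  have hww : vElem Φ x * vElem Φ x = (gmet Φ x).det := Real.mul_self_sqrt hpos.le
  have hs : ∀ i j, (gmet Φ x)⁻¹ i j = (gmet Φ x)⁻¹ j i := by
    intro i j
    have := (himm x hx).isHermitian.inv.apply i j
    simpa using this.symm
  have hadj : ∀ k l, (gmet Φ x).adjugate k l = (gmet Φ x).det * (gmet Φ x)⁻¹ k l := by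
    intro k l
    rw [Matrix.inv_def]
    simp only [Ring.inverse_eq_inv', Matrix.smul_apply, smul_eq_mul]
    field_simp
  set C : Fin n → Fin n → Fin n → ℝ :=
    fun k i j => ⟪pd k Φ x, pd i (fun y => pd j Φ y) x⟫ with hC
  have hG : ∀ i a b, HPD i (fun y => gmet Φ y a b)
      ((Matrix.of fun k l => C l i k + C k i l : Matrix (Fin n) (Fin n) ℝ) a b) x := by
    intro i a b
    refine ((HPD.of_diff (hΦ1 a)).inner (HPD.of_diff (hΦ1 b))).cv ?_
    simp only [hC, Matrix.of_apply]
    rw [real_inner_comm]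
  rw [← lapl_algebra (gmet Φ x)⁻¹ hs C (fun k i j => by simp only [hC]; rw [hΦ2])
    (fun l => pd l f x) (fun i j => pd i (fun y => pd j f y) x)]
  rw [lapl, Finset.mul_sum]
  refine Finset.sum_congr rfl fun i _ => ?_
  rw [Finset.mul_sum]
  refine Finset.sum_congr rfl fun j _ => ?_
  have h1 := (HPD.det (hG i)).sqrt hpos.ne'
  have h2 := (h1.mul (HPD.matInv (hG i) hpos.ne' i j)).mul (HPD.of_diff (i := i) (hf1 j))
  change (vElem Φ x)⁻¹ * pd i (fun y => Real.sqrt (gmet Φ y).det * (gmet Φ y)⁻¹ i j * pd j f y) x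
    = _
  rw [h2.2]
  change (vElem Φ x)⁻¹ * (((_ / (2 * vElem Φ x)) * _ + vElem Φ x * _) * _ + vElem Φ x * _ * _) = _
  simp only [hadj, mul_assoc, ← Finset.mul_sum, Matrix.of_apply]
  rw [← hww]
  field_simp
  ring

lemma normal_expand {n : ℕ} {A : Matrix (Fin n) (Fin n) ℝ} (hA : A.PosDef)
    {P N : En (n + 1)} {e : Fin n → En (n + 1)} (hP : ⟪P, P⟫ = 1) (hPe : ∀ i, ⟪P, e i⟫ = 0)
    (hAe : ∀ i j, A i j = ⟪e i, e j⟫) :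
    ∃ (a : ℝ) (b : Fin n → ℝ), N = a • P + ∑ k, b k • e k := by
  have hgram : A = Matrix.gram ℝ e := by ext i j; simp [hAe, Matrix.gram_apply]
  have hli : LinearIndependent ℝ e := by
    rw [hgram] at hA
    exact Matrix.posDef_gram_iff_linearIndependent.1 hA
  have hnot : P ∉ Submodule.span ℝ (Set.range e) := by
    intro h
    obtain ⟨c, hc⟩ := (Submodule.mem_span_range_iff_exists_fun ℝ).1 h
    have : ⟪P, P⟫ = 0 := by
      nth_rewrite 2 [← hc]
      rw [inner_sum]
      exact Finset.sum_eq_zero fun i _ => by rw [inner_smul_right, hPe, mul_zero]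
    rw [hP] at this
    exact one_ne_zero this
  have hli2 : LinearIndependent ℝ (Fin.cons P e : Fin (n + 1) → En (n + 1)) :=
    linearIndependent_finCons.2 ⟨hli, hnot⟩
  have hsp := hli2.span_eq_top_of_card_eq_finrank' (by simp)
  have hN : N ∈ Submodule.span ℝ (Set.range (Fin.cons P e : Fin (n + 1) → En (n + 1))) := by
    rw [hsp]; trivial
  rw [Fin.range_cons, Submodule.mem_span_insert] at hN
  obtain ⟨a, z, hz, rfl⟩ := hN
  obtain ⟨b, rfl⟩ := (Submodule.mem_span_range_iff_exists_fun ℝ).1 hz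
  exact ⟨a, b, rfl⟩

lemma normal_formula {n : ℕ} {A : Matrix (Fin n) (Fin n) ℝ} (hA : A.PosDef)
    {P N : En (n + 1)} {e : Fin n → En (n + 1)} (hP : ⟪P, P⟫ = 1) (hPe : ∀ i, ⟪P, e i⟫ = 0)
    (hAe : ∀ i j, A i j = ⟪e i, e j⟫) {s : Fin n → Fin n → En (n + 1)}
    (hPs : ∀ i j, ⟪P, s i j⟫ = -A i j) (hN : ⟪N, N⟫ = 1) {r t : ℝ} (hr : r ≠ 0) {v : Fin n → ℝ}
    (hNo : ∀ i, ⟪N, (t * v i) • P + r • e i⟫ = 0) :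
    ∃ c : ℝ, c ^ 2 * (r ^ 2 + t ^ 2 * ∑ i, ∑ j, A⁻¹ i j * v i * v j) = 1 ∧
      ∀ i j h, ⟪N, (t * h) • P + (t * v i) • e j + (t * v j) • e i + r • s i j⟫
        = c * (r * t * (h - ∑ k, (∑ l, A⁻¹ k l * v l) * ⟪e k, s i j⟫) - r ^ 2 * A i j
          - 2 * t ^ 2 * (v i * v j)) := by
  have hu : IsUnit A.det := isUnit_iff_ne_zero.2 hA.det_pos.ne'
  obtain ⟨a, b, hab⟩ := normal_expand (N := N) hA hP hPe hAe
  have heP : ∀ i, ⟪e i, P⟫ = 0 := fun i => by rw [real_inner_comm, hPe]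
  have hNP : ⟪N, P⟫ = a := by
    rw [hab, inner_add_left, sum_inner, inner_smul_left, hP]
    simp [inner_smul_left, heP]
  have hNe0 : ∀ i, ⟪N, e i⟫ = (A.mulVec b) i := by
    intro i
    rw [hab]
    simp only [inner_add_left, sum_inner, inner_smul_left, hPe, Matrix.mulVec, dotProduct]
    simp only [mul_zero, zero_add]
    refine Finset.sum_congr rfl fun k _ => ?_
    rw [hAe, real_inner_comm (e k) (e i)]
    simp [mul_comm]
  have hNe : ∀ i, ⟪N, e i⟫ = -(t * a / r) * v i := by
    intro i
    have := hNo i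
    rw [inner_add_right, inner_smul_right, inner_smul_right, hNP] at this
    field_simp
    linarith
  have hb : ∀ k, b k = -(t * a / r) * ∑ l, A⁻¹ k l * v l := by
    intro k
    have h1 : A.mulVec b = (-(t * a / r)) • v := by
      funext i; rw [← hNe0, hNe]; rfl
    have h2 : b = A⁻¹.mulVec ((-(t * a / r)) • v) := by
      rw [← h1, Matrix.mulVec_mulVec, Matrix.nonsing_inv_mul _ hu, Matrix.one_mulVec]
    rw [h2, Matrix.mulVec_smul]
    rfl
  refine ⟨a / r, ?_, ?_⟩
  · have h1 : ⟪N, N⟫ = a * a + ∑ k, b k * ⟪N, e k⟫ := by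
      nth_rewrite 2 [hab]
      simp [inner_add_right, inner_sum, inner_smul_right, hNP]
    have h2 : ∑ k, b k * ⟪N, e k⟫ = (t * a / r) ^ 2 * ∑ i, ∑ j, A⁻¹ i j * v i * v j := by
      rw [Finset.mul_sum]
      refine Finset.sum_congr rfl fun k _ => ?_
      rw [hb, hNe]
      have : ∑ j, A⁻¹ k j * v k * v j = (∑ l, A⁻¹ k l * v l) * v k := by
        rw [Finset.sum_mul]; exact Finset.sum_congr rfl fun l _ => by ring
      rw [this]; ring
    rw [hN, h2] at h1
    generalize ∑ i, ∑ j, A⁻¹ i j * v i * v j = q at *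
    rw [h1]; field_simp
  · intro i j h
    have h3 : ⟪N, s i j⟫ = a * (-A i j)
        - (t * a / r) * ∑ k, (∑ l, A⁻¹ k l * v l) * ⟪e k, s i j⟫ := by
      nth_rewrite 1 [hab]
      simp only [inner_add_left, sum_inner, inner_smul_left, hPs, hb]
      rw [sub_eq_add_neg, ← neg_mul, Finset.mul_sum]
      simp [mul_assoc]
    simp only [inner_add_right, inner_smul_right, hNP, hNe, h3]
    field_simp
    ring

lemma trace_formula {n : ℕ} {A : Matrix (Fin n) (Fin n) ℝ} (hA : A.PosDef) {r t q D : ℝ}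
    (hr : r ≠ 0) {v : Fin n → ℝ} (hq : q = ∑ i, ∑ j, A⁻¹ i j * v i * v j)
    (hD : D = r ^ 2 + t ^ 2 * q) (hD0 : D ≠ 0) (K M : Matrix (Fin n) (Fin n) ℝ)
    (hM : ∀ i j, M i j = r ^ 2 * A i j + t ^ 2 * (v i * v j)) :
    ∑ i, ∑ j, M⁻¹ i j * (r * t * K i j - r ^ 2 * A i j - 2 * t ^ 2 * (v i * v j))
      = (r ^ 2)⁻¹ * (r * t * (∑ i, ∑ j, A⁻¹ i j * K i j) - n * r ^ 2 - 2 * t ^ 2 * q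
        - t ^ 2 * D⁻¹ * (r * t * (∑ i, ∑ j, (A⁻¹.mulVec v i * A⁻¹.mulVec v j) * K i j)
          - r ^ 2 * q - 2 * t ^ 2 * q ^ 2)) := by
  have hu : IsUnit A.det := isUnit_iff_ne_zero.2 hA.det_pos.ne'
  set u := A⁻¹.mulVec v with hudef
  have hAu : A.mulVec u = v := by
    rw [hudef, Matrix.mulVec_mulVec, Matrix.mul_nonsing_inv _ hu, Matrix.one_mulVec]
  have hsA : ∀ i j, A i j = A j i := fun i j => by
    simpa using (hA.isHermitian.apply i j).symm
  have hs : ∀ i j, A⁻¹ i j = A⁻¹ j i := fun i j => by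
    simpa using (hA.isHermitian.inv.apply i j).symm
  have hvu : ∑ i, v i * u i = q := by
    rw [hq]
    refine Finset.sum_congr rfl fun i _ => ?_
    rw [hudef, Matrix.mulVec, dotProduct, Finset.mul_sum]
    exact Finset.sum_congr rfl fun j _ => by ring
  have hvA : Matrix.vecMul v A⁻¹ = u := by
    funext i
    simp only [Matrix.vecMul, hudef, Matrix.mulVec, dotProduct]
    exact Finset.sum_congr rfl fun j _ => by rw [hs i j]; ring
  have hinv : M⁻¹ = (r ^ 2)⁻¹ • (A⁻¹ - (t ^ 2 * D⁻¹) • Matrix.vecMulVec u u) := by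
    refine Matrix.inv_eq_right_inv ?_
    have hM' : M = r ^ 2 • A + t ^ 2 • Matrix.vecMulVec v v := by
      ext i j; simp [hM, Matrix.vecMulVec_apply]
    have e1 : A * Matrix.vecMulVec u u = Matrix.vecMulVec v u := by
      rw [Matrix.mul_vecMulVec, hAu]
    have e2 : Matrix.vecMulVec v v * A⁻¹ = Matrix.vecMulVec v u := by
      rw [Matrix.vecMulVec_mul, hvA]
    have e3 : Matrix.vecMulVec v v * Matrix.vecMulVec u u = q • Matrix.vecMulVec v u := by
      rw [Matrix.vecMulVec_mul_vecMulVec]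
      have : v ⬝ᵥ u = q := hvu
      rw [this]
      ext i j; simp [Matrix.vecMulVec_apply]; ring
    rw [hM', Matrix.mul_smul, add_mul, mul_sub, mul_sub]
    simp only [Matrix.smul_mul, Matrix.mul_smul, e1, e2, e3, Matrix.mul_nonsing_inv _ hu]
    ext i j
    simp only [Matrix.smul_apply, Matrix.add_apply, Matrix.sub_apply, smul_eq_mul]
    generalize Matrix.vecMulVec v u i j = z
    generalize (1 : Matrix (Fin n) (Fin n) ℝ) i j = o
    field_simp
    rw [hD]
    ring
  have s1 : ∑ i, ∑ j, A⁻¹ i j * A i j = n := by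
    have : ∑ i, ∑ j, A⁻¹ i j * A i j = (A⁻¹ * A).trace := by
      simp only [Matrix.trace, Matrix.diag, Matrix.mul_apply]
      exact Finset.sum_congr rfl fun i _ => Finset.sum_congr rfl fun j _ => by rw [hsA]
    rw [this, Matrix.nonsing_inv_mul _ hu]
    simp
  have s2 : ∑ i, ∑ j, A⁻¹ i j * (v i * v j) = q := by
    rw [hq]; simp only [mul_assoc]
  have s3 : ∑ i, ∑ j, (u i * u j) * A i j = q := by
    rw [← hvu]
    refine Finset.sum_congr rfl fun i _ => ?_
    have : v i = ∑ j, A i j * u j := by rw [← hAu]; rfl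
    rw [this, Finset.sum_mul]
    exact Finset.sum_congr rfl fun j _ => by ring
  have s4 : ∑ i, ∑ j, (u i * u j) * (v i * v j) = q ^ 2 := by
    rw [pow_two, ← hvu, Finset.sum_mul_sum]
    exact Finset.sum_congr rfl fun i _ => Finset.sum_congr rfl fun j _ => by ring
  have expand : ∀ i j, M⁻¹ i j * (r * t * K i j - r ^ 2 * A i j - 2 * t ^ 2 * (v i * v j))
      = (r ^ 2)⁻¹ * (r * t * (A⁻¹ i j * K i j) - r ^ 2 * (A⁻¹ i j * A i j)
          - 2 * t ^ 2 * (A⁻¹ i j * (v i * v j))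
          - t ^ 2 * D⁻¹ * (r * t * ((u i * u j) * K i j) - r ^ 2 * ((u i * u j) * A i j)
          - 2 * t ^ 2 * ((u i * u j) * (v i * v j)))) := by
    intro i j
    rw [hinv]
    simp only [Matrix.smul_apply, Matrix.sub_apply, smul_eq_mul, Matrix.vecMulVec_apply]
    ring
  simp only [expand, ← Finset.mul_sum, Finset.sum_sub_distrib, s1, s2, s3, s4]
  ring

/-- `∂²(H²)/∂t² |_(t=0)
= 6 (f + φ'(0))² + (12/n)(f + φ'(0)) Δf + (2/n²)(Δf)² + ((4−2n)/n) |∇f|² − 2 φ''(0)`. -/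
theorem second_variation_mean_curvature_sq {n : ℕ} (hn : 1 ≤ n) (U : Set (En n)) (hU : IsOpen U)
    (Φ : En n → En (n + 1)) (f : En n → ℝ) (φ : ℝ → ℝ) (ε : ℝ) (hε : 0 < ε)
    (hΦ : ContDiffOn ℝ (⊤ : ℕ∞) Φ U) (hf : ContDiffOn ℝ (⊤ : ℕ∞) f U)
    (hφ : ContDiffOn ℝ (⊤ : ℕ∞) φ (Ioo (-ε) ε)) (hφ0 : φ 0 = 0)
    (hsph : ∀ x ∈ U, ‖Φ x‖ = 1)
    (himm : ∀ x ∈ U, (gmet Φ x).PosDef)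
    (N : ℝ → En n → En (n + 1))
    (hNsm : ContDiffOn ℝ (⊤ : ℕ∞) (fun p : ℝ × En n => N p.1 p.2) (Ioo (-ε) ε ×ˢ U))
    (hNunit : ∀ t ∈ Ioo (-ε) ε, ∀ x ∈ U, ‖N t x‖ = 1)
    (hNorth : ∀ t ∈ Ioo (-ε) ε, ∀ x ∈ U, ∀ i : Fin n, ⟪N t x, pd i (Xvar f φ Φ t) x⟫ = 0)
    (hN0 : ∀ x ∈ U, N 0 x = Φ x) :
    ∀ x ∈ U,
      deriv (deriv (fun t => (Hmean (Xvar f φ Φ t) (N t) x) ^ 2)) 0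
        = 6 * (f x + deriv φ 0) ^ 2
          + (12 / (n : ℝ)) * (f x + deriv φ 0) * lapl Φ f x
          + (2 / (n : ℝ) ^ 2) * (lapl Φ f x) ^ 2
          + ((4 - 2 * (n : ℝ)) / n) * gradSq Φ f x
          - 2 * deriv (deriv φ) 0 := by
  intro x hx
  have hUn : ∀ {x}, x ∈ U → U ∈ nhds x := fun h => hU.mem_nhds h
  obtain ⟨hΦ0, hΦ1, hΦ2⟩ := smooth_facts hU hΦ hx
  obtain ⟨hf0, hf1, hf2⟩ := smooth_facts hU hf hx
  -- tangent vectors are orthogonal to the position vector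
  have hPP : ∀ y ∈ U, ⟪Φ y, Φ y⟫ = 1 := fun y hy => by
    rw [real_inner_self_eq_norm_sq, hsph y hy]; norm_num
  have hPe : ∀ y ∈ U, ∀ i, ⟪Φ y, pd i Φ y⟫ = 0 := by
    intro y hy i
    have hd := (smooth_facts hU hΦ hy).1
    have h1 := (HPD.of_diff (i := i) hd).inner (HPD.of_diff (i := i) hd)
    have h2 : HPD i (fun z => ⟪Φ z, Φ z⟫) 0 y := by
      refine (HPD.const (1 : ℝ)).congr ?_
      filter_upwards [hUn hy] with z hz using hPP z hz
    have := h1.unique h2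
    rw [real_inner_comm (Φ y) (pd i Φ y)] at this
    linarith
  have hPs : ∀ i j, ⟪Φ x, pd j (fun y => pd i Φ y) x⟫ = -gmet Φ x i j := by
    intro i j
    have h1 := (HPD.of_diff (i := j) hΦ0).inner (HPD.of_diff (i := j) (hΦ1 i))
    have h2 : HPD j (fun z => ⟪Φ z, pd i Φ z⟫) 0 x := by
      refine (HPD.const (0 : ℝ)).congr ?_
      filter_upwards [hUn hx] with z hz using hPe z hz i
    have := h1.unique h2
    have e : gmet Φ x i j = ⟪pd j Φ x, pd i Φ x⟫ :=
      real_inner_comm (pd j Φ x) (pd i Φ x)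
    rw [e]
    linarith
  set r : ℝ → ℝ := fun t => 1 + t * f x + φ t with hrdef
  set q := gradSq Φ f x with hq
  set L := lapl Φ f x with hL
  set v : Fin n → ℝ := fun i => pd i f x with hv
  set K : Matrix (Fin n) (Fin n) ℝ := Matrix.of fun i j => pd j (fun y => pd i f y) x
    - ∑ k, (∑ l, (gmet Φ x)⁻¹ k l * v l) * ⟪pd k Φ x, pd j (fun y => pd i Φ y) x⟫ with hK
  set B := ∑ i, ∑ j, ((gmet Φ x)⁻¹.mulVec v i * (gmet Φ x)⁻¹.mulVec v j) * K i j with hB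
  have hLK : ∑ i, ∑ j, (gmet Φ x)⁻¹ i j * K i j = L := by
    rw [hL, lapl_eq hU hΦ hf himm hx]
    refine Finset.sum_congr rfl fun i _ => Finset.sum_congr rfl fun j _ => ?_
    simp only [hK, Matrix.of_apply]
    rw [hf2 i j, hΦ2 i j]
  -- the closed formula for `H²`
  have key : ∀ t ∈ Ioo (-ε) ε, r t ≠ 0 → (Hmean (Xvar f φ Φ t) (N t) x) ^ 2 =
      ((r t ^ 2)⁻¹ * (r t * t * L - n * r t ^ 2 - 2 * t ^ 2 * q
        - t ^ 2 * (r t ^ 2 + t ^ 2 * q)⁻¹ * (r t * t * B - r t ^ 2 * q - 2 * t ^ 2 * q ^ 2))) ^ 2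
        * ((n : ℝ) ^ 2 * (r t ^ 2 + t ^ 2 * q))⁻¹ := by
    intro t ht hr0
    have hX1 : ∀ y ∈ U, ∀ i, HPD i (Xvar f φ Φ t)
        ((t * pd i f y) • Φ y + (1 + t * f y + φ t) • pd i Φ y) y := by
      intro y hy i
      have h1 := HPD.of_diff (i := i) (smooth_facts hU hΦ hy).1
      have h2 := HPD.of_diff (i := i) (smooth_facts hU hf hy).1
      refine ((((HPD.const (1 : ℝ)).add ((HPD.const t).mul h2)).add
        (HPD.const (φ t))).smul h1).cv ?_
      simp
    have hX2 : ∀ i j, HPD j (fun y => pd i (Xvar f φ Φ t) y)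
        ((t * pd j (fun y => pd i f y) x) • Φ x + (t * v i) • pd j Φ x + (t * v j) • pd i Φ x
          + r t • pd j (fun y => pd i Φ y) x) x := by
      intro i j
      have h1 := HPD.of_diff (i := j) hΦ0
      have h2 := HPD.of_diff (i := j) hf0
      have h3 := HPD.of_diff (i := j) (hΦ1 i)
      have h4 := HPD.of_diff (i := j) (hf1 i)
      have h5 := (((HPD.const t).mul h4).smul h1).add
        ((((HPD.const (1 : ℝ)).add ((HPD.const t).mul h2)).add (HPD.const (φ t))).smul h3)
      refine (h5.congr ?_).cv ?_
      · filter_upwards [hUn hx] with y hy using (hX1 y hy i).2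
      · simp only [zero_mul, zero_add, add_zero, hv, hrdef]
        abel
    have hNd : DifferentiableAt ℝ (N t) x := by
      have h1 : DifferentiableAt ℝ (fun p : ℝ × En n => N p.1 p.2) (t, x) :=
        (hNsm.contDiffAt ((isOpen_Ioo.prod hU).mem_nhds ⟨ht, hx⟩)).differentiableAt (by simp)
      exact h1.comp x ((differentiableAt_const t).prodMk differentiableAt_id)
    have hsff : ∀ i j, sff (Xvar f φ Φ t) (N t) x i j
        = -⟪N t x, pd j (fun y => pd i (Xvar f φ Φ t) y) x⟫ := by
      intro i j
      have h1 := (HPD.of_diff (i := j) hNd).inner (HPD.of_diff (i := j) (hX2 i j).1)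
      have h2 : HPD j (fun z => ⟪N t z, pd i (Xvar f φ Φ t) z⟫) 0 x := by
        refine (HPD.const (0 : ℝ)).congr ?_
        filter_upwards [hUn hx] with z hz using hNorth t ht z hz i
      have := h1.unique h2
      have e : sff (Xvar f φ Φ t) (N t) x i j
        = ⟪pd j (N t) x, pd i (Xvar f φ Φ t) x⟫ :=
        real_inner_comm (pd j (N t) x) (pd i (Xvar f φ Φ t) x)
      rw [e]
      linarith
    obtain ⟨c, hc, hform⟩ := normal_formula (himm x hx) (N := N t x) (hPP x hx) (hPe x hx)
      (fun i j => rfl) hPs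
      (by rw [real_inner_self_eq_norm_sq, hNunit t ht x hx]; norm_num) (t := t) hr0 (v := v)
      (fun i => by rw [← hNorth t ht x hx i, (hX1 x hx i).2])
    change c ^ 2 * (r t ^ 2 + t ^ 2 * q) = 1 at hc
    have hD0 : r t ^ 2 + t ^ 2 * q ≠ 0 := fun h => by rw [h, mul_zero] at hc; exact zero_ne_one hc
    have hM : ∀ i j, gmet (Xvar f φ Φ t) x i j
        = r t ^ 2 * gmet Φ x i j + t ^ 2 * (v i * v j) := by
      intro i j
      change ⟪pd i (Xvar f φ Φ t) x, pd j (Xvar f φ Φ t) x⟫ = r t ^ 2 * ⟪pd i Φ x, pd j Φ x⟫ + _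
      rw [(hX1 x hx i).2, (hX1 x hx j).2]
      have heP : ⟪pd i Φ x, Φ x⟫ = 0 := by rw [real_inner_comm, hPe x hx]
      simp only [inner_add_left, inner_add_right, real_inner_smul_left, real_inner_smul_right,
        hPP x hx, hPe x hx, heP, hv, hrdef]
      ring
    have htr := trace_formula (himm x hx) hr0 (v := v) (q := q) rfl rfl hD0 K _ hM
    have hH : Hmean (Xvar f φ Φ t) (N t) x = -(c / n) *
        ∑ i, ∑ j, (gmet (Xvar f φ Φ t) x)⁻¹ i j * (r t * t * K i j - r t ^ 2 * gmet Φ x i j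
          - 2 * t ^ 2 * (v i * v j)) := by
      rw [Hmean, Finset.mul_sum, Finset.mul_sum]
      refine Finset.sum_congr rfl fun i _ => ?_
      rw [Finset.mul_sum, Finset.mul_sum]
      refine Finset.sum_congr rfl fun j _ => ?_
      rw [hsff, (hX2 i j).2, hform]
      simp only [hK, Matrix.of_apply]
      ring
    rw [hH, htr, hLK, mul_pow, mul_comm]
    congr 1
    have hn0 : (n : ℝ) ≠ 0 := by exact_mod_cast (by omega : n ≠ 0)
    field_simp
    linarith
  -- the 2-jet of the radial function
  have h0 : (0 : ℝ) ∈ Ioo (-ε) ε := ⟨by linarith, hε⟩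
  have hI : Ioo (-ε) ε ∈ nhds (0 : ℝ) := isOpen_Ioo.mem_nhds h0
  have hjφ : Jet2 φ 0 (deriv φ 0) (deriv (deriv φ) 0) := by
    refine ⟨deriv φ, ?_, hφ0, rfl, ?_⟩
    · filter_upwards [hI] with t ht
      exact ((hφ.contDiffAt (isOpen_Ioo.mem_nhds ht)).differentiableAt (by simp)).hasDerivAt
    · have h1 : ContDiffOn ℝ 1 (deriv φ) (Ioo (-ε) ε) :=
        hφ.deriv_of_isOpen isOpen_Ioo (WithTop.coe_le_coe.2 (le_top : ((1 : ℕ∞) + 1) ≤ ⊤))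
      exact ((h1.contDiffAt hI).differentiableAt (by simp)).hasDerivAt
  have hjr : Jet2 r 1 (f x + deriv φ 0) (deriv (deriv φ) 0) := by
    convert ((Jet2.const 1).add (Jet2.id.mul (Jet2.const (f x)))).add hjφ using 1 <;> ring
  have hrne : ∀ᶠ t in nhds (0 : ℝ), r t ≠ 0 := by
    obtain ⟨r', h1, h2, -⟩ := hjr
    exact h1.self_of_nhds.continuousAt.eventually_ne (by rw [h2]; exact one_ne_zero)
  have hn0 : (n : ℝ) ≠ 0 := by exact_mod_cast (by omega : n ≠ 0)
  refine ((jet_final _ _ _ L q B n hn0 r hjr).congr ?_).deriv2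
  filter_upwards [hI, hrne] with t ht hr using key t ht hr
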